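/- Fix t ≥ 0. If σ is a permutation with t_rev(σ) ≥ t+1 such that every permutation properly contained in σ has rev-tier at most t (i.e., σ is a basis element of the class of permutations with rev-tier at most t), then the length of σ is at most 3(t+1). -/

import Mathlib

/-!
A chain of `t + 1` alternating separated pairs is witnessed by few entries: for each pair
`(a, a+1)` the entries `a`, `a+1` and one larger entry between them. Restricting `σ` to these
at most `3 (t + 1)` entries keeps each pair consecutive in value, keeps its orientation and its
separating entry, and keeps the pairs in order. The restricted pattern therefore still has
rev-tier at least `t + 1`, so minimality of `σ` forces it to be all of `σ`.

`exists_restrict` builds the pattern on a set of positions, `UpSepPair.exists_support` and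
`DownSepPair.exists_support` give the three positions that make a pair survive restriction.
-/

/-!  Common definitions: permutation patterns, separated pairs, rev-tier. -/

/-- `π` contains the pattern `σ`. -/
def Pattern.Contains {n k : ℕ} (π : Equiv.Perm (Fin n)) (σ : Equiv.Perm (Fin k)) : Prop :=
  ∃ α : Fin k → Fin n, StrictMono α ∧ ∀ i j : Fin k, (π (α i) < π (α j) ↔ σ i < σ j)

/-- `π` avoids the pattern `σ`. -/
def Pattern.Avoids {n k : ℕ} (π : Equiv.Perm (Fin n)) (σ : Equiv.Perm (Fin k)) : Prop :=
  ¬ Pattern.Contains π σ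

/-- The pair of values `(a, a+1)` (0-indexed) is an up oriented separated pair in `σ`:
`a` precedes `a+1` and some value `> a+1` occurs strictly between them. -/
def UpSepPair {n : ℕ} (σ : Equiv.Perm (Fin n)) (a : Fin n) : Prop :=
  ∃ hb : (a : ℕ) + 1 < n,
    σ.symm a < σ.symm ⟨(a : ℕ) + 1, hb⟩ ∧
    ∃ p : Fin n, σ.symm a < p ∧ p < σ.symm ⟨(a : ℕ) + 1, hb⟩ ∧ (a : ℕ) + 1 < (σ p : ℕ)

/-- The pair of values `(a, a+1)` (0-indexed) is a down oriented separated pair in `σ`. -/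
def DownSepPair {n : ℕ} (σ : Equiv.Perm (Fin n)) (a : Fin n) : Prop :=
  ∃ hb : (a : ℕ) + 1 < n,
    σ.symm ⟨(a : ℕ) + 1, hb⟩ < σ.symm a ∧
    ∃ p : Fin n, σ.symm ⟨(a : ℕ) + 1, hb⟩ < p ∧ p < σ.symm a ∧ (a : ℕ) + 1 < (σ p : ℕ)

/-- `(a, a+1)` is a separated pair (of either orientation). -/
def SepPair {n : ℕ} (σ : Equiv.Perm (Fin n)) (a : Fin n) : Prop :=
  UpSepPair σ a ∨ DownSepPair σ a

/-- `σ` has no separated pairs. -/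
def NoSepPairs {n : ℕ} (σ : Equiv.Perm (Fin n)) : Prop :=
  ∀ a : Fin n, ¬ SepPair σ a

/-- `f` lists the lower values of an increasing sequence of separated pairs in `σ` with
alternating orientations; the first pair is down oriented iff `firstDown = true`. -/
def AltChain {n : ℕ} (σ : Equiv.Perm (Fin n)) (firstDown : Bool) {t : ℕ}
    (f : Fin t → Fin n) : Prop :=
  StrictMono f ∧ ∀ j : Fin t,
    if ((j : ℕ) % 2 = 0) ↔ (firstDown = true) then DownSepPair σ (f j)
    else UpSepPair σ (f j)

/-- The rev-tier of `σ`: the maximal length of an increasing sequence of separated pairs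
with alternating orientations beginning with a down oriented pair. -/
noncomputable def revTier {n : ℕ} (σ : Equiv.Perm (Fin n)) : ℕ :=
  sSup {t : ℕ | ∃ f : Fin t → Fin n, AltChain σ true f}

/-- Maximal length of an increasing alternating sequence of separated pairs (either
starting orientation). -/
noncomputable def maxAltLen {n : ℕ} (σ : Equiv.Perm (Fin n)) : ℕ :=
  sSup {t : ℕ | ∃ b : Bool, ∃ f : Fin t → Fin n, AltChain σ b f}

/-- `σ` has a separated pair and every maximum-length increasing alternating sequence of
separated pairs begins with an up oriented pair. -/
def UpOriented {n : ℕ} (σ : Equiv.Perm (Fin n)) : Prop :=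
  1 ≤ maxAltLen σ ∧ ¬ ∃ f : Fin (maxAltLen σ) → Fin n, AltChain σ true f

/-- `σ` has a separated pair and every maximum-length increasing alternating sequence of
separated pairs begins with a down oriented pair. -/
def DownOriented {n : ℕ} (σ : Equiv.Perm (Fin n)) : Prop :=
  1 ≤ maxAltLen σ ∧ ¬ ∃ f : Fin (maxAltLen σ) → Fin n, AltChain σ false f

/-- `σ` is a basis element of the class of permutations of rev-tier at most `t`. -/
def IsBasisElt (t : ℕ) {n : ℕ} (σ : Equiv.Perm (Fin n)) : Prop :=
  t + 1 ≤ revTier σ ∧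
  ∀ (m : ℕ) (τ : Equiv.Perm (Fin m)), m < n → Pattern.Contains σ τ → revTier τ ≤ t

/-- The entry `1` of `σ` is in (1-indexed) position `k`. -/
def onePos {n : ℕ} (σ : Equiv.Perm (Fin n)) (k : ℕ) : Prop :=
  ∀ h : 0 < n, (σ.symm ⟨0, h⟩ : ℕ) + 1 = k

/-- `η(n,k)`: number of permutations of length `n` with no separated pairs and entry `1`
in position `k`. -/
noncomputable def eta (n k : ℕ) : ℕ :=
  Nat.card {σ : Equiv.Perm (Fin n) // NoSepPairs σ ∧ onePos σ k}

/-- `η(n)`: number of permutations of length `n` with no separated pairs. -/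
noncomputable def etaTot (n : ℕ) : ℕ :=
  Nat.card {σ : Equiv.Perm (Fin n) // NoSepPairs σ}

/-- `μ_U(n,t,k)`: number of up-oriented permutations of length `n`, rev-tier `t`, with
entry `1` in position `k`. -/
noncomputable def muU (n t k : ℕ) : ℕ :=
  Nat.card {σ : Equiv.Perm (Fin n) // UpOriented σ ∧ revTier σ = t ∧ onePos σ k}

/-- `μ_D(n,t,k)`: number of down-oriented permutations of length `n`, rev-tier `t`, with
entry `1` in position `k`. -/
noncomputable def muD (n t k : ℕ) : ℕ :=
  Nat.card {σ : Equiv.Perm (Fin n) // DownOriented σ ∧ revTier σ = t ∧ onePos σ k}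

/-- `π` is a down-up alternating permutation: `π₁ > π₂ < π₃ > ⋯`. -/
def DownUp {n : ℕ} (π : Equiv.Perm (Fin n)) : Prop :=
  ∀ (i : ℕ) (h : i + 1 < n),
    if i % 2 = 0 then π ⟨i + 1, h⟩ < π ⟨i, by omega⟩
    else π ⟨i, by omega⟩ < π ⟨i + 1, h⟩

/-- The Entringer number `E_{n,k}`: down-up alternating permutations of length `n` whose
first entry is `k` (1-indexed value). -/
noncomputable def entringer (n k : ℕ) : ℕ :=
  Nat.card {π : Equiv.Perm (Fin n) // DownUp π ∧ ∀ h : 0 < n, (π ⟨0, h⟩ : ℕ) + 1 = k}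

/-- The reversal of a permutation: `(revP σ) j = σ (n + 1 - j)`. -/
def revP {n : ℕ} (σ : Equiv.Perm (Fin n)) : Equiv.Perm (Fin n) :=
  (Fin.revPerm).trans σ

/-- The explicit maximal rev-tier permutation of length `n` (0-indexed values):
the even entries of `{1,…,n}` in decreasing order, then `n`, then the odd entries in
increasing order. -/
def maxPermVal (n : ℕ) (i : Fin n) : Fin n :=
  if h1 : (i : ℕ) < (n - 1) / 2 then
    ⟨2 * ((n - 1) / 2) - 2 * (i : ℕ) - 1, by omega⟩
  else if h2 : (i : ℕ) = (n - 1) / 2 then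
    ⟨n - 1, by have := i.isLt; omega⟩
  else
    ⟨2 * ((i : ℕ) - (n - 1) / 2 - 1), by have := i.isLt; omega⟩

def p231 : Equiv.Perm (Fin 3) :=
  ⟨![1, 2, 0], ![2, 0, 1], by decide, by decide⟩

def p132 : Equiv.Perm (Fin 3) :=
  ⟨![0, 2, 1], ![0, 2, 1], by decide, by decide⟩

def p2413 : Equiv.Perm (Fin 4) :=
  ⟨![1, 3, 0, 2], ![2, 0, 3, 1], by decide, by decide⟩

def p2431 : Equiv.Perm (Fin 4) :=
  ⟨![1, 3, 2, 0], ![3, 0, 2, 1], by decide, by decide⟩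

def p23154 : Equiv.Perm (Fin 5) :=
  ⟨![1, 2, 0, 4, 3], ![2, 0, 1, 4, 3], by decide, by decide⟩

def p24153 : Equiv.Perm (Fin 5) :=
  ⟨![1, 3, 0, 4, 2], ![2, 0, 4, 1, 3], by decide, by decide⟩

def p24513 : Equiv.Perm (Fin 5) :=
  ⟨![1, 3, 4, 0, 2], ![3, 0, 4, 1, 2], by decide, by decide⟩

def p24531 : Equiv.Perm (Fin 5) :=
  ⟨![1, 3, 4, 2, 0], ![4, 0, 3, 1, 2], by decide, by decide⟩

def p42513 : Equiv.Perm (Fin 5) :=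
  ⟨![3, 1, 4, 0, 2], ![3, 1, 4, 0, 2], by decide, by decide⟩

def p42531 : Equiv.Perm (Fin 5) :=
  ⟨![3, 1, 4, 2, 0], ![4, 1, 3, 0, 2], by decide, by decide⟩

def p231564 : Equiv.Perm (Fin 6) :=
  ⟨![1, 2, 0, 4, 5, 3], ![2, 0, 1, 5, 3, 4], by decide, by decide⟩

def p261453 : Equiv.Perm (Fin 6) :=
  ⟨![1, 5, 0, 3, 4, 2], ![2, 0, 5, 3, 4, 1], by decide, by decide⟩

def p523164 : Equiv.Perm (Fin 6) :=
  ⟨![4, 1, 2, 0, 5, 3], ![3, 1, 2, 5, 0, 4], by decide, by decide⟩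

def p562413 : Equiv.Perm (Fin 6) :=
  ⟨![4, 5, 1, 3, 0, 2], ![4, 2, 5, 3, 0, 1], by decide, by decide⟩

def p562431 : Equiv.Perm (Fin 6) :=
  ⟨![4, 5, 1, 3, 2, 0], ![5, 2, 4, 3, 0, 1], by decide, by decide⟩

def p6723154 : Equiv.Perm (Fin 7) :=
  ⟨![5, 6, 1, 2, 0, 4, 3], ![4, 2, 3, 6, 5, 0, 1], by decide, by decide⟩

def p4321 : Equiv.Perm (Fin 4) :=
  ⟨![3, 2, 1, 0], ![3, 2, 1, 0], by decide, by decide⟩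

def p4213 : Equiv.Perm (Fin 4) :=
  ⟨![3, 1, 0, 2], ![2, 1, 3, 0], by decide, by decide⟩

/-- The pattern of `σ` on the positions `s`: `α` lists the positions and `β` the values that
are kept, both in increasing order. -/
lemma exists_restrict {n : ℕ} (σ : Equiv.Perm (Fin n)) (s : Finset (Fin n)) :
    ∃ (τ : Equiv.Perm (Fin s.card)) (α β : Fin s.card → Fin n), StrictMono α ∧ StrictMono β ∧
      (∀ i, β (τ i) = σ (α i)) ∧ ∀ p ∈ s, ∃ i, α i = p := by
  have hc : (s.map σ.toEmbedding).card = s.card := Finset.card_map _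
  let A := s.orderIsoOfFin rfl
  let B := (s.map σ.toEmbedding).orderIsoOfFin hc
  let e : s ≃ (s.map σ.toEmbedding : Finset (Fin n)) :=
    σ.subtypeEquiv (fun a => by simp)
  refine ⟨(A.toEquiv.trans e).trans B.symm.toEquiv, fun i => A i, fun i => B i,
    fun i j h => A.strictMono h, fun i j h => B.strictMono h, fun i => ?_, fun p hp => ?_⟩
  · simp [e]
  · exact ⟨A.symm ⟨p, hp⟩, by simp⟩

lemma restrict_symm {n m : ℕ} {σ : Equiv.Perm (Fin n)} {τ : Equiv.Perm (Fin m)}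
    {α β : Fin m → Fin n} (h : ∀ i, β (τ i) = σ (α i)) (x : Fin m) :
    α (τ.symm x) = σ.symm (β x) := by
  rw [Equiv.eq_symm_apply, ← h, Equiv.apply_symm_apply]

/-- Values that differ by one in `σ` and are both kept still differ by one in the pattern. -/
lemma restrict_succ {n m : ℕ} {β : Fin m → Fin n} (hβ : StrictMono β) {a b : Fin m}
    (hab : (β b : ℕ) = β a + 1) : (b : ℕ) = a + 1 := by
  have h1 : a < b := hβ.lt_iff_lt.1 (by rw [Fin.lt_def]; omega)
  by_contra hne
  rw [Fin.lt_def] at h1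
  have hm : (a : ℕ) + 1 < m := by omega
  have h2 : β a < β ⟨a + 1, hm⟩ := hβ (by simp [Fin.lt_def])
  have h3 : β ⟨a + 1, hm⟩ < β b := hβ (by rw [Fin.lt_def]; simp only; omega)
  rw [Fin.lt_def] at h2 h3
  omega

/-- An up oriented separated pair survives in every pattern that keeps a suitable set of at most
three positions, namely those of its two entries and of one separating entry. -/
lemma UpSepPair.exists_support {n : ℕ} {σ : Equiv.Perm (Fin n)} {a : Fin n}
    (h : UpSepPair σ a) : ∃ s : Finset (Fin n), s.card ≤ 3 ∧ σ.symm a ∈ s ∧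
      ∀ (m : ℕ) (τ : Equiv.Perm (Fin m)) (α β : Fin m → Fin n), StrictMono α → StrictMono β →
        (∀ i, β (τ i) = σ (α i)) → (∀ p ∈ s, ∃ i, α i = p) → ∀ x, β x = a → UpSepPair τ x := by
  obtain ⟨hb, hlt, p, hp1, hp2, hp3⟩ := h
  refine ⟨{σ.symm a, σ.symm ⟨a + 1, hb⟩, p}, Finset.card_le_three, by simp, ?_⟩
  rintro m τ α β hα hβ hτ hs x rfl
  obtain ⟨i, hi⟩ := hs (σ.symm ⟨β x + 1, hb⟩) (by simp)
  obtain ⟨q, rfl⟩ := hs p (by simp)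
  have hy : β (τ i) = ⟨β x + 1, hb⟩ := by rw [hτ, hi, Equiv.apply_symm_apply]
  have hyx : (τ i : ℕ) = x + 1 := restrict_succ hβ (by rw [hy])
  have hm : (x : ℕ) + 1 < m := hyx ▸ (τ i).isLt
  have hi' : τ.symm ⟨x + 1, hm⟩ = i := by
    rw [Equiv.symm_apply_eq]; exact Fin.ext hyx.symm
  rw [← restrict_symm hτ, ← hi, hα.lt_iff_lt] at hlt
  rw [← restrict_symm hτ, hα.lt_iff_lt] at hp1
  rw [← hi, hα.lt_iff_lt] at hp2
  refine ⟨hm, by rwa [hi'], q, hp1, by rwa [hi'], ?_⟩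
  rw [← hyx, ← Fin.lt_def, ← hβ.lt_iff_lt, hy, hτ]
  exact hp3

/-- The analogue of `UpSepPair.exists_support` for down oriented pairs. -/
lemma DownSepPair.exists_support {n : ℕ} {σ : Equiv.Perm (Fin n)} {a : Fin n}
    (h : DownSepPair σ a) : ∃ s : Finset (Fin n), s.card ≤ 3 ∧ σ.symm a ∈ s ∧
      ∀ (m : ℕ) (τ : Equiv.Perm (Fin m)) (α β : Fin m → Fin n), StrictMono α → StrictMono β →
        (∀ i, β (τ i) = σ (α i)) → (∀ p ∈ s, ∃ i, α i = p) → ∀ x, β x = a →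
          DownSepPair τ x := by
  obtain ⟨hb, hlt, p, hp1, hp2, hp3⟩ := h
  refine ⟨{σ.symm a, σ.symm ⟨a + 1, hb⟩, p}, Finset.card_le_three, by simp, ?_⟩
  rintro m τ α β hα hβ hτ hs x rfl
  obtain ⟨i, hi⟩ := hs (σ.symm ⟨β x + 1, hb⟩) (by simp)
  obtain ⟨q, rfl⟩ := hs p (by simp)
  have hy : β (τ i) = ⟨β x + 1, hb⟩ := by rw [hτ, hi, Equiv.apply_symm_apply]
  have hyx : (τ i : ℕ) = x + 1 := restrict_succ hβ (by rw [hy])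
  have hm : (x : ℕ) + 1 < m := hyx ▸ (τ i).isLt
  have hi' : τ.symm ⟨x + 1, hm⟩ = i := by
    rw [Equiv.symm_apply_eq]; exact Fin.ext hyx.symm
  rw [← restrict_symm hτ, ← hi, hα.lt_iff_lt] at hlt
  rw [← hi, hα.lt_iff_lt] at hp1
  rw [← restrict_symm hτ, hα.lt_iff_lt] at hp2
  refine ⟨hm, by rwa [hi'], q, by rwa [hi'], hp2, ?_⟩
  rw [← hyx, ← Fin.lt_def, ← hβ.lt_iff_lt, hy, hτ]
  exact hp3

/-- The set whose supremum is `revTier σ` is bounded, so that supremum is not a junk value. -/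
lemma bddAbove_altChain {n : ℕ} (σ : Equiv.Perm (Fin n)) :
    BddAbove {t : ℕ | ∃ f : Fin t → Fin n, AltChain σ true f} := by
  refine ⟨n, ?_⟩
  rintro t ⟨f, hf, -⟩
  simpa using Fintype.card_le_of_injective f hf.injective

lemma exists_altChain_of_le_revTier {n k : ℕ} {σ : Equiv.Perm (Fin n)} (h : k ≤ revTier σ) :
    ∃ f : Fin k → Fin n, AltChain σ true f := by
  have hne : {t : ℕ | ∃ f : Fin t → Fin n, AltChain σ true f}.Nonempty :=
    ⟨0, Fin.elim0, fun i => i.elim0, fun i => i.elim0⟩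
  obtain ⟨f, hf, hf'⟩ := Nat.sSup_mem hne (bddAbove_altChain σ)
  exact ⟨fun j => f (Fin.castLE h j), fun i j hij => hf (Fin.strictMono_castLE h hij),
    fun j => hf' (Fin.castLE h j)⟩

/-- every basis element of the class of permutations with rev-tier at most
`t` has length at most `3(t+1)`. -/
theorem basisElt_length_le (t : ℕ) {n : ℕ} (σ : Equiv.Perm (Fin n))
    (h : IsBasisElt t σ) : n ≤ 3 * (t + 1) := by
  obtain ⟨hT, hmin⟩ := h
  obtain ⟨f, hf, hsep⟩ := exists_altChain_of_le_revTier hT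
  have key : ∀ j : Fin (t + 1), ∃ s : Finset (Fin n), s.card ≤ 3 ∧ σ.symm (f j) ∈ s ∧
      ∀ (m : ℕ) (τ : Equiv.Perm (Fin m)) (α β : Fin m → Fin n), StrictMono α → StrictMono β →
        (∀ i, β (τ i) = σ (α i)) → (∀ p ∈ s, ∃ i, α i = p) → ∀ x, β x = f j →
          if ((j : ℕ) % 2 = 0) ↔ (true = true) then DownSepPair τ x else UpSepPair τ x := by
    intro j
    have hj := hsep j
    split_ifs at hj ⊢ with hc
    · exact hj.exists_support
    · exact hj.exists_support
  choose s hcard hmem hs using key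
  obtain ⟨τ, α, β, hα, hβ, hτ, hsurj⟩ := exists_restrict σ (Finset.univ.biUnion s)
  have hle : (Finset.univ.biUnion s).card ≤ 3 * (t + 1) := by
    have := Finset.card_biUnion_le_card_mul Finset.univ s 3 (fun j _ => hcard j)
    simpa [mul_comm] using this
  have hsub : ∀ j, ∀ p ∈ s j, ∃ i, α i = p := fun j p hp =>
    hsurj p (Finset.mem_biUnion.2 ⟨j, Finset.mem_univ j, hp⟩)
  choose g hg using fun j => hsub j _ (hmem j)
  have hgf : ∀ j, β (τ (g j)) = f j := fun j => by rw [hτ, hg, Equiv.apply_symm_apply]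
  have hchain : AltChain τ true (fun j => τ (g j)) :=
    ⟨fun i j hij => hβ.lt_iff_lt.1 (by rw [hgf, hgf]; exact hf hij),
      fun j => hs j _ τ α β hα hβ hτ (hsub j) _ (hgf j)⟩
  have htier : t + 1 ≤ revTier τ := le_csSup (bddAbove_altChain τ) ⟨_, hchain⟩
  by_contra hn
  have := hmin _ τ (by omega) ⟨α, hα, fun i j => by rw [← hτ, ← hτ, hβ.lt_iff_lt]⟩
  omega
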